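/- Let G be a finite undirected multigraph and A an Abelian group. For any equivalence class T of 3-edge-connected vertices of G and any a∈A, the function g:V→A defined by g(w)=a for all w∈T and g(u)=0 for all vertices u∉T is balanceable. -/

import Mathlib

open Finset

/-- A finite undirected multigraph: each edge `e : E` has an unordered pair of
endpoints `ends e : Sym2 V`.  Loops and parallel edges are allowed and the graph
need not be connected. -/
structure Multigraph (V E : Type*) where
  ends : E → Sym2 V

namespace Multigraph

variable {V E : Type*}

/-- `G.IsChain x y p` : `p` is an alternating sequence `v₁,e₁,…,vₙ,eₙ` (encoded as a
list of vertex-edge pairs) which forms a walk from `x` to `y` (the final vertex `y`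
is omitted, i.e. this is "truncated"). -/
def IsChain (G : Multigraph V E) : V → V → List (V × E) → Prop
  | x, y, [] => x = y
  | x, y, (v, e) :: rest => v = x ∧ ∃ w, G.ends e = s(x, w) ∧ G.IsChain w y rest

/-- A truncated trail (ttrail) from `x` to `y`: an alternating walk with no repeated
edges, final vertex omitted. -/
def IsTtrail (G : Multigraph V E) (x y : V) (p : List (V × E)) : Prop :=
  G.IsChain x y p ∧ (p.map Prod.snd).Nodup

/-- A cycle: a closed ttrail with no repeated vertices. -/
def IsCycle (G : Multigraph V E) (x : V) (p : List (V × E)) : Prop :=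
  G.IsTtrail x x p ∧ (p.map Prod.fst).Nodup

/-- Two ttrails are edge-disjoint if they have no common edges. -/
def EdgeDisjoint (p q : List (V × E)) : Prop :=
  ∀ e, e ∈ p.map Prod.snd → e ∉ q.map Prod.snd

/-- `k`-edge-connectivity: two distinct vertices are `k`-edge-connected if there are
`k` pairwise edge-disjoint ttrails between them; every vertex is `k`-edge-connected
to itself. -/
def KConn (G : Multigraph V E) (k : ℕ) (v w : V) : Prop :=
  v = w ∨ ∃ p : Fin k → List (V × E),
    (∀ i, G.IsTtrail v w (p i)) ∧ ∀ i j, i ≠ j → EdgeDisjoint (p i) (p j)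

/-- `conk G k` : the number of equivalence classes of `k`-edge-connected vertices. -/
noncomputable def conk (G : Multigraph V E) (k : ℕ) : ℕ :=
  Nat.card (Quotient (Relation.EqvGen.setoid (G.KConn k)))

/-- The number of connected components of `G`. -/
noncomputable def con (G : Multigraph V E) : ℕ := G.conk 1

section Homology

variable [Fintype V] [Fintype E] [DecidableEq V] [DecidableEq E]

/-- The vector in `F₂^V` which is the sum of the two endpoints of the edge `e`
(so a loop is sent to `0`). -/
def edgeVec (G : Multigraph V E) (e : E) : V → ZMod 2 := fun v =>
  Sym2.lift ⟨fun a b => (if v = a then (1 : ZMod 2) else 0) + (if v = b then 1 else 0),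
    fun _ _ => add_comm _ _⟩ (G.ends e)

/-- The boundary map `δ : F₂^E → F₂^V`, sending each edge to the sum of its two
adjacent vertices. -/
def boundary (G : Multigraph V E) : (E → ZMod 2) →ₗ[ZMod 2] (V → ZMod 2) where
  toFun c := fun v => ∑ e, c e * G.edgeVec e v
  map_add' c d := by
    funext v
    simp [add_mul, Finset.sum_add_distrib]
  map_smul' r c := by
    funext v
    simp [Finset.mul_sum, mul_assoc]

/-- The Cycle Space of `G` : the kernel of the boundary map. -/
def cycleSpace (G : Multigraph V E) : Submodule (ZMod 2) (E → ZMod 2) :=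
  LinearMap.ker G.boundary

/-- The indicator vector of a vertex in `F₂^V`. -/
def vert (v : V) : V → ZMod 2 := fun w => if w = v then 1 else 0

/-- A `k`-weak homological cycle: a homological path between two `k`-edge-connected
vertices. -/
def IsWeakCycle (G : Multigraph V E) (k : ℕ) (c : E → ZMod 2) : Prop :=
  ∃ v w, G.KConn k v w ∧ G.boundary c = vert v + vert w

/-- The `k`-Weak Cycle Space: the span of all `k`-weak homological cycles. -/
def weakCycleSpace (G : Multigraph V E) (k : ℕ) : Submodule (ZMod 2) (E → ZMod 2) :=
  Submodule.span (ZMod 2) {c | G.IsWeakCycle k c}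

/-- `eps p` : the set of edges of the ttrail `p`, as a vector in `F₂^E`. -/
def eps (p : List (V × E)) : E → ZMod 2 := fun e => if e ∈ p.map Prod.snd then 1 else 0

/-- The `F₂`-linear extension of `f : E → A` to subsets of `E`: the sum of `f` over
the edges of the subset `S`. -/
def fSum {A : Type*} [AddCommGroup A] (f : E → A) (S : E → ZMod 2) : A :=
  ∑ e ∈ Finset.univ.filter fun e => S e = 1, f e

end Homology

section Balanced

variable {A : Type*} [AddCommGroup A]

/-- The sum `g(v₁)+f(e₁)+…+g(vₙ)+f(eₙ)` of the values of a vertex-function `g` and an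
edge-function `f` along a ttrail `v₁,e₁,…,vₙ,eₙ`. -/
def pathSum (g : V → A) (f : E → A) (p : List (V × E)) : A :=
  (p.map fun ve => g ve.1 + f ve.2).sum

/-- The sum `h(v₁)+h(e₁)+…+h(vₙ)+h(eₙ)` of the values of `h : V ∪ E → A` along a
ttrail `v₁,e₁,…,vₙ,eₙ`. -/
def wSum (h : V ⊕ E → A) (p : List (V × E)) : A :=
  (p.map fun ve => h (Sum.inl ve.1) + h (Sum.inr ve.2)).sum

lemma pathSum_cons (g : V → A) (f : E → A) (a : V × E) (t : List (V × E)) :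
    pathSum g f (a :: t) = (g a.1 + f a.2) + pathSum g f t := by
  simp [pathSum]

lemma pathSum_zero (p : List (V × E)) : pathSum (0 : V → A) (0 : E → A) p = 0 := by
  induction p with
  | nil => simp [pathSum]
  | cons a t ih => simp [pathSum_cons, ih]

lemma pathSum_add (g g' : V → A) (f f' : E → A) (p : List (V × E)) :
    pathSum (g + g') (f + f') p = pathSum g f p + pathSum g' f' p := by
  induction p with
  | nil => simp [pathSum]
  | cons a t ih => simp only [pathSum_cons, Pi.add_apply, ih]; abel

lemma pathSum_neg (g : V → A) (f : E → A) (p : List (V × E)) :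
    pathSum (-g) (-f) p = -pathSum g f p := by
  induction p with
  | nil => simp [pathSum]
  | cons a t ih => simp only [pathSum_cons, Pi.neg_apply, ih]; abel

lemma wSum_cons (h : V ⊕ E → A) (a : V × E) (t : List (V × E)) :
    wSum h (a :: t) = (h (Sum.inl a.1) + h (Sum.inr a.2)) + wSum h t := by
  simp [wSum]

lemma wSum_zero (p : List (V × E)) : wSum (0 : V ⊕ E → A) p = 0 := by
  induction p with
  | nil => simp [wSum]
  | cons a t ih => simp [wSum_cons, ih]

lemma wSum_add (h h' : V ⊕ E → A) (p : List (V × E)) :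
    wSum (h + h') p = wSum h p + wSum h' p := by
  induction p with
  | nil => simp [wSum]
  | cons a t ih => simp only [wSum_cons, Pi.add_apply, ih]; abel

lemma wSum_neg (h : V ⊕ E → A) (p : List (V × E)) :
    wSum (-h) p = -wSum h p := by
  induction p with
  | nil => simp [wSum]
  | cons a t ih => simp only [wSum_cons, Pi.neg_apply, ih]; abel

/-- A function `f : E → A` is balanced if the sum of its values along every closed
ttrail of `G` is zero. -/
def BalancedE (G : Multigraph V E) (f : E → A) : Prop :=
  ∀ x p, G.IsTtrail x x p → pathSum (0 : V → A) f p = 0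

/-- A function `g : V → A` is balanceable if some `f : E → A` balances it, i.e. the
sum of the values of `g` and `f` along every closed ttrail of `G` is zero. -/
def Balanceable (G : Multigraph V E) (g : V → A) : Prop :=
  ∃ f : E → A, ∀ x p, G.IsTtrail x x p → pathSum g f p = 0

/-- A function `h : V ∪ E → A` is balanced if the sum of its values along every
closed ttrail of `G` is zero. -/
def BalancedW (G : Multigraph V E) (h : V ⊕ E → A) : Prop :=
  ∀ x p, G.IsTtrail x x p → wSum h p = 0

/-- `H(E,A)` : the group of balanced functions from `E` to `A`. -/
def Hgroup (G : Multigraph V E) (A : Type*) [AddCommGroup A] : AddSubgroup (E → A) where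
  carrier := {f | G.BalancedE f}
  zero_mem' := fun _ p _ => pathSum_zero p
  add_mem' := by
    intro f f' hf hf' x p hp
    have h := pathSum_add (0 : V → A) 0 f f' p
    rw [add_zero] at h
    rw [h, hf x p hp, hf' x p hp, add_zero]
  neg_mem' := by
    intro f hf x p hp
    have h := pathSum_neg (0 : V → A) f p
    rw [neg_zero] at h
    rw [h, hf x p hp, neg_zero]

/-- `B(V,A)` : the group of balanceable functions from `V` to `A`. -/
def Bgroup (G : Multigraph V E) (A : Type*) [AddCommGroup A] : AddSubgroup (V → A) where
  carrier := {g | G.Balanceable g}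
  zero_mem' := ⟨0, fun _ p _ => pathSum_zero p⟩
  add_mem' := by
    rintro g g' ⟨f, hf⟩ ⟨f', hf'⟩
    exact ⟨f + f', fun x p hp => by rw [pathSum_add, hf x p hp, hf' x p hp, add_zero]⟩
  neg_mem' := by
    rintro g ⟨f, hf⟩
    exact ⟨-f, fun x p hp => by rw [pathSum_neg, hf x p hp, neg_zero]⟩

/-- `W(V ∪ E, A)` : the group of balanced functions from `V ∪ E` to `A`. -/
def Wgroup (G : Multigraph V E) (A : Type*) [AddCommGroup A] : AddSubgroup (V ⊕ E → A) where
  carrier := {h | G.BalancedW h}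
  zero_mem' := fun _ p _ => wSum_zero p
  add_mem' := by
    intro h h' hh hh' x p hp
    rw [wSum_add, hh x p hp, hh' x p hp, add_zero]
  neg_mem' := by
    intro h hh x p hp
    rw [wSum_neg, hh x p hp, neg_zero]

end Balanced

/-- A `3`-weakly closed ttrail (a ttrail between `3`-edge-connected vertices) which is
short: no inner vertex is `3`-edge-connected to the initial vertex. -/
def ShortW (G : Multigraph V E) (x y : V) (p : List (V × E)) : Prop :=
  G.IsTtrail x y p ∧ G.KConn 3 x y ∧ ∀ v ∈ (p.map Prod.fst).tail, ¬ G.KConn 3 v x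

/-- `G.ShortChain x y L` : `L` is a list of nontrivial short `3`-weakly closed ttrails
which concatenate into a ttrail from `x` to `y`. -/
def ShortChain (G : Multigraph V E) : V → V → List (List (V × E)) → Prop
  | x, y, [] => x = y
  | x, y, s :: rest => s ≠ [] ∧ ∃ z, G.ShortW x z s ∧ G.ShortChain z y rest

/-- `A₂` : the subgroup of elements of order dividing `2` in `A`. -/
def torsion2 (A : Type*) [AddCommGroup A] : AddSubgroup A where
  carrier := {a | 2 • a = 0}
  zero_mem' := by simp
  add_mem' := by
    intro a b ha hb
    simp only [Set.mem_setOf_eq] at *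
    rw [smul_add, ha, hb, add_zero]
  neg_mem' := by
    intro a ha
    simp only [Set.mem_setOf_eq] at *
    rw [smul_neg, ha, neg_zero]

/-- `2A` : the image of the doubling map `a ↦ 2a`. -/
def double2 (A : Type*) [AddCommGroup A] : AddSubgroup A where
  carrier := {b | ∃ a, b = 2 • a}
  zero_mem' := ⟨0, by simp⟩
  add_mem' := by
    rintro a b ⟨x, rfl⟩ ⟨y, rfl⟩
    exact ⟨x + y, by rw [smul_add]⟩
  neg_mem' := by
    rintro a ⟨x, rfl⟩
    exact ⟨-x, by rw [smul_neg]⟩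

end Multigraph

namespace Multigraph

variable {V E : Type*} [Fintype V] [Fintype E] [DecidableEq V] [DecidableEq E]

/-!
By Menger's theorem fewer than three edges separate a vertex outside the class `T` from `T`. Hence
each component of `G - T` is attached to `T` by at most two edges: three of them would give three
edge-disjoint routes to `T` from some vertex of the component. Put the weight `-a` on the edges
inside `T`, `0` on the edges outside `T`, and `-a` on exactly one of the edges attaching each
component. A trail from `T` into a component returns by the other attaching edge, so every excursion
contributes `-a`, which cancels the `a` of the vertex of `T` where it starts.

Menger's theorem comes from augmenting integral unit-capacity flows along residual trails; a flow
whose residual trails do not reach `t` saturates a cut, and a flow of value `k` splits into `k`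
edge-disjoint trails.
-/

section

variable {V E : Type*} {G : Multigraph V E} {x y z : V} {p q : List (V × E)}

theorem isChain_append :
    G.IsChain x y (p ++ q) ↔ ∃ z, G.IsChain x z p ∧ G.IsChain z y q := by
  induction p generalizing x with
  | nil => simp [IsChain]
  | cons d p ih =>
    simp only [List.cons_append, IsChain, ih]
    tauto

theorem IsChain.exists_split_of_mem_ends {e : E} (hp : G.IsChain x y p)
    (he : e ∈ p.map Prod.snd) {v : V} (hv : v ∈ G.ends e) :
    ∃ p₁ p₂, p = p₁ ++ p₂ ∧ G.IsChain x v p₁ ∧ G.IsChain v y p₂ := by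
  obtain ⟨⟨u, e⟩, hd, rfl⟩ := List.mem_map.1 he
  obtain ⟨p₁, p₂, rfl⟩ := List.append_of_mem hd
  obtain ⟨u, h₁, rfl, w, hw, h₂⟩ := isChain_append.1 hp
  rcases Sym2.mem_iff.1 (hw ▸ hv) with rfl | rfl
  · exact ⟨p₁, (v, e) :: p₂, rfl, h₁, rfl, w, hw, h₂⟩
  · exact ⟨p₁ ++ [(u, e)], p₂, by simp, isChain_append.2 ⟨u, h₁, rfl, v, hw, rfl⟩, h₂⟩

theorem IsTtrail.exists_rotation {v : V} (hp : G.IsTtrail x x p) (hv : v ∈ p.map Prod.fst) :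
    ∃ q, q.Perm p ∧ G.IsTtrail v v q := by
  obtain ⟨⟨v, e⟩, hd, rfl⟩ := List.mem_map.1 hv
  obtain ⟨p₁, p₂, rfl⟩ := List.append_of_mem hd
  obtain ⟨v, h₁, rfl, h₂⟩ := isChain_append.1 hp.1
  have hperm : ((v, e) :: p₂ ++ p₁).Perm (p₁ ++ (v, e) :: p₂) := List.perm_append_comm
  exact ⟨_, hperm, isChain_append.2 ⟨x, ⟨rfl, h₂⟩, h₁⟩, (hperm.map Prod.snd).nodup_iff.2 hp.2⟩

theorem EdgeDisjoint.symm (h : EdgeDisjoint p q) : EdgeDisjoint q p :=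
  fun e hq hp => h e hp hq

theorem IsChain.exists_edgeDisjoint_truncation (hp : G.IsChain x y p) (hq : G.IsChain y z q) :
    ∃ c p' q₁ q₂, p' ⊆ p ∧ q = q₁ ++ q₂ ∧ EdgeDisjoint p' q ∧
      G.IsChain x c p' ∧ G.IsChain y c q₁ ∧ G.IsChain c z q₂ := by
  induction p generalizing x with
  | nil => exact ⟨y, [], [], q, by simp, rfl, by simp [EdgeDisjoint], hp, rfl, hq⟩
  | cons d p ih =>
    obtain ⟨v, e⟩ := d
    obtain ⟨rfl, w, hw, hp⟩ := hp
    by_cases he : e ∈ q.map Prod.snd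
    · obtain ⟨q₁, q₂, rfl, h₁, h₂⟩ := hq.exists_split_of_mem_ends he (v := v) (by simp [hw])
      exact ⟨v, [], q₁, q₂, by simp, rfl, by simp [EdgeDisjoint], rfl, h₁, h₂⟩
    · obtain ⟨c, p', q₁, q₂, hsub, rfl, hdisj, h₀, h₁, h₂⟩ := ih hp
      refine ⟨c, (v, e) :: p', q₁, q₂, List.cons_subset_cons _ hsub, rfl, ?_,
        ⟨rfl, w, hw, h₀⟩, h₁, h₂⟩
      rintro e' he'
      rcases List.mem_cons.1 he' with rfl | he'
      exacts [he, hdisj e' he']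

theorem exists_ttrail_of_forall_cut (P : V × E → Prop) {s t : V}
    (h : ∀ S : Set V, s ∈ S → t ∉ S → ∃ u ∈ S, ∃ w ∉ S, ∃ e, G.ends e = s(u, w) ∧ P (u, e)) :
    ∃ p, G.IsTtrail s t p ∧ ∀ d ∈ p, P d := by
  by_contra hs
  have ht : ∃ p, G.IsTtrail t t p ∧ ∀ d ∈ p, P d := ⟨[], ⟨rfl, by simp⟩, by simp⟩
  obtain ⟨u, hu, w, hw, e, he, hP⟩ :=
    h {v | ¬ ∃ p, G.IsTtrail v t p ∧ ∀ d ∈ p, P d} hs (not_not_intro ht)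
  obtain ⟨q, ⟨hq, hnd⟩, hqP⟩ := not_not.1 hw
  refine hu ?_
  by_cases heq : e ∈ q.map Prod.snd
  · obtain ⟨q₁, q₂, rfl, -, h₂⟩ := hq.exists_split_of_mem_ends heq (v := u) (by simp [he])
    rw [List.map_append] at hnd
    exact ⟨q₂, ⟨h₂, hnd.of_append_right⟩, fun d hd => hqP d (List.mem_append_right _ hd)⟩
  · exact ⟨(u, e) :: q, ⟨⟨rfl, w, he, hq⟩, List.nodup_cons.2 ⟨heq, hnd⟩⟩,
      List.forall_mem_cons.2 ⟨hP, hqP⟩⟩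

/-- The edge cut of `S`: the edges with one end in `S` and the other outside `S`. -/
def edgeCut (G : Multigraph V E) (S : Set V) : Set E :=
  {e | ∃ u ∈ S, ∃ w ∉ S, G.ends e = s(u, w)}

theorem mem_edgeCut_iff {S : Set V} {e : E} {u w : V} (h : G.ends e = s(u, w)) :
    e ∈ G.edgeCut S ↔ ¬ (u ∈ S ↔ w ∈ S) := by
  constructor
  · rintro ⟨u', hu, w', hw, h'⟩
    rcases Sym2.eq_iff.1 (h.symm.trans h') with ⟨rfl, rfl⟩ | ⟨rfl, rfl⟩ <;> tauto
  · intro hne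
    by_cases hu : u ∈ S
    · exact ⟨u, hu, w, by tauto, h⟩
    · exact ⟨w, by tauto, u, hu, h.trans Sym2.eq_swap⟩

theorem IsChain.exists_mem_edgeCut {S : Set V} (hp : G.IsChain x y p) (hxy : ¬ (x ∈ S ↔ y ∈ S)) :
    ∃ e ∈ p.map Prod.snd, e ∈ G.edgeCut S := by
  induction p generalizing x with
  | nil =>
    cases (hp : x = y)
    exact absurd Iff.rfl hxy
  | cons d p ih =>
    obtain ⟨v, e⟩ := d
    obtain ⟨rfl, w, hw, hp⟩ := hp
    by_cases hwy : w ∈ S ↔ y ∈ S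
    · exact ⟨e, by simp, (mem_edgeCut_iff hw).2 (by tauto)⟩
    · obtain ⟨e', he', hcut⟩ := ih hp hwy
      exact ⟨e', List.mem_cons_of_mem _ he', hcut⟩

theorem KConn.le_encard_edgeCut {k : ℕ} {s t : V} (h : G.KConn k s t) {S : Set V} (hs : s ∈ S)
    (ht : t ∉ S) : k ≤ (G.edgeCut S).encard := by
  obtain rfl | ⟨p, hp, hdisj⟩ := h
  · exact absurd hs ht
  choose e he hcut using fun i => (hp i).1.exists_mem_edgeCut (S := S) (by tauto)
  have hinj : Function.Injective e := fun i j hij => by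
    by_contra hne
    exact hdisj i j hne (e i) (he i) (hij ▸ he j)
  calc (k : ℕ∞) = (Set.range e).encard := by
        rw [← Set.image_univ, hinj.encard_image, Set.encard_univ, ENat.card_eq_coe_fintype_card,
          Fintype.card_fin]
    _ ≤ (G.edgeCut S).encard := Set.encard_le_encard (Set.range_subset_iff.2 hcut)

/-- The tail of `e` in a fixed arbitrary orientation of `G`, needed to give flows a sign. -/
noncomputable def tail (G : Multigraph V E) (e : E) : V := (G.ends e).out.1

/-- The head of `e` in the orientation of `G` chosen by `Multigraph.tail`. -/
noncomputable def head (G : Multigraph V E) (e : E) : V := (G.ends e).out.2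

open Classical in
/-- `1` if the edge `d.2`, when traversed starting from its end `d.1`, is traversed along the
orientation chosen by `Multigraph.tail`, and `-1` otherwise. -/
noncomputable def dartSign (G : Multigraph V E) (d : V × E) : ℤ :=
  if G.tail d.2 = d.1 then 1 else -1

theorem dartSign_eq_one_or_neg_one (d : V × E) : G.dartSign d = 1 ∨ G.dartSign d = -1 := by
  unfold dartSign
  split_ifs <;> simp

theorem dartSign_cases {e : E} {u w : V} (h : G.ends e = s(u, w)) :
    (G.dartSign (u, e) = 1 ∧ G.tail e = u ∧ G.head e = w) ∨
      (G.dartSign (u, e) = -1 ∧ G.tail e = w ∧ G.head e = u) := by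
  have hout : s(G.tail e, G.head e) = s(u, w) := (Quot.out_eq (G.ends e)).trans h
  by_cases htail : G.tail e = u <;> grind [dartSign, Sym2.eq_iff]

/-- The `ℤ`-linear map sending a finitely supported `φ` to its net outflow at every vertex. -/
noncomputable def divergence (G : Multigraph V E) : (E →₀ ℤ) →ₗ[ℤ] V →₀ ℤ :=
  Finsupp.linearCombination ℤ fun e => Finsupp.single (G.tail e) 1 - Finsupp.single (G.head e) 1

/-- The flow sending one unit along the sequence `p`. -/
noncomputable def chainFlow (G : Multigraph V E) (p : List (V × E)) : E →₀ ℤ :=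
  (p.map fun d => Finsupp.single d.2 (G.dartSign d)).sum

theorem chainFlow_cons (d : V × E) :
    G.chainFlow (d :: p) = Finsupp.single d.2 (G.dartSign d) + G.chainFlow p := by
  simp [chainFlow]

theorem IsChain.divergence_chainFlow (hp : G.IsChain x y p) :
    G.divergence (G.chainFlow p) = Finsupp.single x 1 - Finsupp.single y 1 := by
  induction p generalizing x with
  | nil =>
    cases (hp : x = y)
    simp [chainFlow]
  | cons d p ih =>
    obtain ⟨v, e⟩ := d
    obtain ⟨rfl, w, hw, hp⟩ := hp
    have hstep : G.divergence (Finsupp.single e (G.dartSign (v, e))) =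
        Finsupp.single v 1 - Finsupp.single w 1 := by
      rcases dartSign_cases hw with ⟨hsign, rfl, rfl⟩ | ⟨hsign, rfl, rfl⟩ <;>
        simp [divergence, hsign]
    rw [chainFlow_cons, map_add, hstep, ih hp, sub_add_sub_cancel]

theorem chainFlow_apply_of_notMem {e : E} (he : e ∉ p.map Prod.snd) : G.chainFlow p e = 0 := by
  induction p with
  | nil => rfl
  | cons d p ih =>
    rw [List.map_cons, List.mem_cons, not_or] at he
    rw [chainFlow_cons, Finsupp.add_apply, Finsupp.single_eq_of_ne he.1, ih he.2, add_zero]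

theorem chainFlow_apply_of_mem (hp : (p.map Prod.snd).Nodup) {d : V × E} (hd : d ∈ p) :
    G.chainFlow p d.2 = G.dartSign d := by
  induction p with
  | nil => simp at hd
  | cons d' p ih =>
    rw [List.map_cons, List.nodup_cons] at hp
    rw [chainFlow_cons, Finsupp.add_apply]
    rcases List.mem_cons.1 hd with rfl | hd
    · rw [Finsupp.single_eq_same, chainFlow_apply_of_notMem hp.1, add_zero]
    · have hne : d.2 ≠ d'.2 := fun h => hp.1 (h ▸ List.mem_map_of_mem hd)
      rw [Finsupp.single_eq_of_ne hne, ih hp.2 hd, zero_add]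

/-- A flow of value `k` from `s` to `t` with unit capacities: a finitely supported integral flow
using every edge at most once, conserved away from `s` and `t`. -/
structure IsUnitFlow (G : Multigraph V E) (s t : V) (k : ℕ) (φ : E →₀ ℤ) : Prop where
  abs_le_one : ∀ e, |φ e| ≤ 1
  divergence_eq : G.divergence φ = (k : ℤ) • (Finsupp.single s 1 - Finsupp.single t 1)

/-- `1` if the chosen orientation of `e` leaves `S`, `-1` if it enters `S`, and `0` otherwise. -/
noncomputable def cutSign (G : Multigraph V E) (S : Set V) (e : E) : ℤ :=
  S.indicator 1 (G.tail e) - S.indicator 1 (G.head e)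

variable {s t : V} {k : ℕ} {φ : E →₀ ℤ} {S : Set V}

theorem cutSign_eq_dartSign {e : E} {u w : V} (h : G.ends e = s(u, w)) (hu : u ∈ S) (hw : w ∉ S) :
    G.cutSign S e = G.dartSign (u, e) := by
  rcases dartSign_cases h with ⟨hsign, rfl, rfl⟩ | ⟨hsign, rfl, rfl⟩ <;>
    simp [cutSign, hsign, hu, hw]

theorem cutSign_of_notMem_edgeCut {e : E} (he : e ∉ G.edgeCut S) : G.cutSign S e = 0 := by
  have hiff : G.tail e ∈ S ↔ G.head e ∈ S :=
    not_not.1 (mt (mem_edgeCut_iff (Quot.out_eq (G.ends e)).symm).2 he)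
  by_cases ht : G.tail e ∈ S <;> simp [cutSign, ht, hiff.symm]

theorem IsUnitFlow.sum_mul_cutSign (hφ : G.IsUnitFlow s t k φ) (hs : s ∈ S) (ht : t ∉ S) :
    ∑ e ∈ φ.support, φ e * G.cutSign S e = k := by
  have h := congrArg (Finsupp.linearCombination ℤ (S.indicator (1 : V → ℤ))) hφ.divergence_eq
  have hdiv : G.divergence φ = ∑ e ∈ φ.support,
      φ e • (Finsupp.single (G.tail e) 1 - Finsupp.single (G.head e) 1) :=
    Finsupp.linearCombination_apply ℤ φ
  rw [hdiv, map_sum] at h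
  simpa [cutSign, hs, ht] using h

theorem IsUnitFlow.add_chainFlow (hφ : G.IsUnitFlow s t k φ) (hp : G.IsTtrail s t p)
    (hres : ∀ d ∈ p, |φ d.2 + G.dartSign d| ≤ 1) :
    G.IsUnitFlow s t (k + 1) (φ + G.chainFlow p) where
  abs_le_one e := by
    by_cases he : e ∈ p.map Prod.snd
    · obtain ⟨d, hd, rfl⟩ := List.mem_map.1 he
      rw [Finsupp.add_apply, chainFlow_apply_of_mem hp.2 hd]
      exact hres d hd
    · rw [Finsupp.add_apply, chainFlow_apply_of_notMem he, add_zero]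
      exact hφ.abs_le_one e
  divergence_eq := by
    rw [map_add, hφ.divergence_eq, hp.1.divergence_chainFlow]
    push_cast
    rw [add_smul, one_smul]

theorem IsUnitFlow.sub_chainFlow (hφ : G.IsUnitFlow s t (k + 1) φ) (hp : G.IsTtrail s t p)
    (hflow : ∀ d ∈ p, φ d.2 = G.dartSign d) :
    G.IsUnitFlow s t k (φ - G.chainFlow p) where
  abs_le_one e := by
    by_cases he : e ∈ p.map Prod.snd
    · obtain ⟨d, hd, rfl⟩ := List.mem_map.1 he
      simp [chainFlow_apply_of_mem hp.2 hd, hflow d hd]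
    · simpa [chainFlow_apply_of_notMem he] using hφ.abs_le_one e
  divergence_eq := by
    rw [map_sub, hφ.divergence_eq, hp.1.divergence_chainFlow]
    push_cast
    rw [add_smul, one_smul, add_sub_cancel_right]

theorem IsUnitFlow.encard_edgeCut_of_saturated (hφ : G.IsUnitFlow s t k φ) (hs : s ∈ S)
    (ht : t ∉ S)
    (hsat : ∀ u ∈ S, ∀ w ∉ S, ∀ e, G.ends e = s(u, w) → φ e = G.dartSign (u, e)) :
    (G.edgeCut S).encard = k := by
  classical
  have hcut : ∀ e ∈ G.edgeCut S, φ e ≠ 0 ∧ φ e * G.cutSign S e = 1 := by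
    rintro e ⟨u, hu, w, hw, h⟩
    rw [cutSign_eq_dartSign h hu hw, hsat u hu w hw e h]
    rcases G.dartSign_eq_one_or_neg_one (u, e) with hsign | hsign <;> simp [hsign]
  have hcoe : G.edgeCut S = (φ.support.filter (· ∈ G.edgeCut S) : Finset E) := by
    ext e
    simpa using fun he => (hcut e he).1
  have hcard : (#{e ∈ φ.support | e ∈ G.edgeCut S} : ℤ) = k := by
    rw [← hφ.sum_mul_cutSign hs ht, Finset.card_filter, Nat.cast_sum]
    refine Finset.sum_congr rfl fun e _ => ?_
    split_ifs with he
    · simp [(hcut e he).2]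
    · simp [cutSign_of_notMem_edgeCut he]
  rw [hcoe, Set.encard_coe_eq_coe_finsetCard]
  exact_mod_cast hcard

theorem IsUnitFlow.exists_augmentation (hφ : G.IsUnitFlow s t k φ)
    (hcut : ∀ S : Set V, s ∈ S → t ∉ S → k + 1 ≤ (G.edgeCut S).encard) :
    ∃ ψ, G.IsUnitFlow s t (k + 1) ψ := by
  obtain ⟨p, hp, hres⟩ :
      ∃ p, G.IsTtrail s t p ∧ ∀ d ∈ p, |φ d.2 + G.dartSign d| ≤ 1 := by
    refine exists_ttrail_of_forall_cut (fun d => |φ d.2 + G.dartSign d| ≤ 1) fun S hs ht => ?_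
    by_contra! hno
    have hsat : ∀ u ∈ S, ∀ w ∉ S, ∀ e, G.ends e = s(u, w) → φ e = G.dartSign (u, e) := by
      intro u hu w hw e h
      have := hφ.abs_le_one e
      have := hno u hu w hw e h
      rcases G.dartSign_eq_one_or_neg_one (u, e) with hsign | hsign <;> grind
    have hlt := hcut S hs ht
    rw [hφ.encard_edgeCut_of_saturated hs ht hsat] at hlt
    exact absurd hlt (by exact_mod_cast Nat.not_succ_le_self k)
  exact ⟨_, hφ.add_chainFlow hp hres⟩

theorem IsUnitFlow.exists_ttrail_along (hφ : G.IsUnitFlow s t (k + 1) φ) :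
    ∃ p, G.IsTtrail s t p ∧ ∀ d ∈ p, φ d.2 = G.dartSign d := by
  refine exists_ttrail_of_forall_cut (fun d => φ d.2 = G.dartSign d) fun S hs ht => ?_
  by_contra! hno
  have hnonpos : ∑ e ∈ φ.support, φ e * G.cutSign S e ≤ 0 := by
    refine Finset.sum_nonpos fun e _ => ?_
    by_cases he : e ∈ G.edgeCut S
    · obtain ⟨u, hu, w, hw, h⟩ := he
      have := hφ.abs_le_one e
      have := hno u hu w hw e h
      rw [cutSign_eq_dartSign h hu hw]
      rcases G.dartSign_eq_one_or_neg_one (u, e) with hsign | hsign <;> grind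
    · simp [cutSign_of_notMem_edgeCut he]
  rw [hφ.sum_mul_cutSign hs ht] at hnonpos
  omega

theorem IsUnitFlow.exists_edgeDisjoint_ttrails (hφ : G.IsUnitFlow s t k φ) :
    ∃ p : Fin k → List (V × E), (∀ i, G.IsTtrail s t (p i)) ∧
      (∀ i j, i ≠ j → EdgeDisjoint (p i) (p j)) ∧ ∀ i, ∀ e ∈ (p i).map Prod.snd, φ e ≠ 0 := by
  induction k generalizing φ with
  | zero => exact ⟨Fin.elim0, fun i => i.elim0, fun i => i.elim0, fun i => i.elim0⟩
  | succ k ih =>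
    obtain ⟨q, hq, hflow⟩ := hφ.exists_ttrail_along
    obtain ⟨p, hp, hdisj, hsupp⟩ := ih (hφ.sub_chainFlow hq hflow)
    have hqp : ∀ i, EdgeDisjoint (p i) q := by
      intro i e hei heq
      obtain ⟨d, hd, rfl⟩ := List.mem_map.1 heq
      refine hsupp i _ hei ?_
      rw [Finsupp.sub_apply, chainFlow_apply_of_mem hq.2 hd, hflow d hd, sub_self]
    refine ⟨Fin.cons q p, Fin.cases hq hp, ?_, Fin.cases ?_ fun i e he => ?_⟩
    · refine Fin.cases (Fin.cases (absurd rfl) fun j _ => (hqp j).symm) fun i =>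
        Fin.cases (fun _ => hqp i) fun j hij => hdisj i j (hij ∘ congrArg Fin.succ)
    · intro e he
      obtain ⟨d, hd, rfl⟩ := List.mem_map.1 he
      rcases G.dartSign_eq_one_or_neg_one d with hsign | hsign <;> simp [hflow d hd, hsign]
    · simpa [chainFlow_apply_of_notMem (hqp i e he)] using hsupp i e he

theorem exists_isUnitFlow_of_forall_le_encard_edgeCut
    (hcut : ∀ S : Set V, s ∈ S → t ∉ S → k ≤ (G.edgeCut S).encard) :
    ∃ φ, G.IsUnitFlow s t k φ := by
  induction k with
  | zero => exact ⟨0, by simp, by simp⟩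
  | succ k ih =>
    obtain ⟨φ, hφ⟩ := ih fun S hs ht => le_trans (by simp) (hcut S hs ht)
    exact hφ.exists_augmentation fun S hs ht => by simpa using hcut S hs ht

theorem kConn_iff_forall_le_encard_edgeCut :
    G.KConn k s t ↔ ∀ S : Set V, s ∈ S → t ∉ S → k ≤ (G.edgeCut S).encard := by
  refine ⟨fun h S hs ht => h.le_encard_edgeCut hs ht, fun hcut => ?_⟩
  obtain ⟨φ, hφ⟩ := exists_isUnitFlow_of_forall_le_encard_edgeCut hcut
  obtain ⟨p, hp, hdisj, -⟩ := hφ.exists_edgeDisjoint_ttrails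
  exact Or.inr ⟨p, hp, hdisj⟩

/-- Every vertex outside `T` can be separated from all of `T` at once by deleting fewer than `k`
edges. For `k = 3` this is what makes the indicator functions of `T` balanceable. -/
def IsEdgeSeparated (G : Multigraph V E) (k : ℕ) (T : Set V) : Prop :=
  ∀ c ∉ T, ∃ S, c ∈ S ∧ Disjoint S T ∧ (G.edgeCut S).encard < k

theorem isEdgeSeparated_setOf_kConn : G.IsEdgeSeparated k {w | G.KConn k w t} := by
  intro c hc
  rw [Set.mem_ofPred_eq, kConn_iff_forall_le_encard_edgeCut] at hc
  push Not at hc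
  obtain ⟨S, hcS, ht, hlt⟩ := hc
  exact ⟨S, hcS, Set.disjoint_left.2 fun w hw hwt => hlt.not_ge (hwt.le_encard_edgeCut hw ht), hlt⟩

variable {T : Set V}

/-- Adjacency in the graph obtained from `G` by deleting the vertices of `T`. -/
def AdjOff (G : Multigraph V E) (T : Set V) (u w : V) : Prop :=
  u ∉ T ∧ w ∉ T ∧ ∃ e, G.ends e = s(u, w)

/-- The connected component of `x` in the graph obtained from `G` by deleting the vertices of `T`;
a vertex of `T` forms a component by itself. -/
def componentOff (G : Multigraph V E) (T : Set V) (x : V) : Quot (G.AdjOff T) := Quot.mk _ x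

/-- The edge `e` joins a vertex of `T` to the vertex `x` outside `T`. -/
def Attaches (G : Multigraph V E) (T : Set V) (e : E) (x : V) : Prop :=
  x ∉ T ∧ ∃ t ∈ T, G.ends e = s(t, x)

theorem Attaches.eq {e : E} (hx : G.Attaches T e x) (hy : G.Attaches T e y) : x = y := by
  obtain ⟨-, t, ht, h⟩ := hx
  obtain ⟨hyT, t', -, h'⟩ := hy
  rcases Sym2.eq_iff.1 (h.symm.trans h') with ⟨-, hxy⟩ | ⟨rfl, -⟩
  exacts [hxy, absurd ht hyT]

theorem exists_ttrail_of_componentOff_eq (h : G.componentOff T x = G.componentOff T y) :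
    ∃ p, G.IsTtrail x y p ∧ ∀ d ∈ p, ∀ v ∈ G.ends d.2, v ∉ T := by
  refine exists_ttrail_of_forall_cut (fun d => ∀ v ∈ G.ends d.2, v ∉ T) fun S hx hy => ?_
  by_contra! hno
  have hclosed : ∀ u w, G.AdjOff T u w → u ∈ S → w ∈ S := by
    rintro u w ⟨hu, hw, e, he⟩ huS
    by_contra hwS
    obtain ⟨v, hv, hvT⟩ := hno u huS w hwS e he
    rw [he, Sym2.mem_iff] at hv
    rcases hv with rfl | rfl
    exacts [hu hvT, hw hvT]
  have hinv : ∀ u w, G.AdjOff T u w → (u ∈ S) = (w ∈ S) := fun u w huw =>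
    propext ⟨hclosed u w huw, hclosed w u
      ⟨huw.2.1, huw.1, huw.2.2.imp fun _ he => he.trans Sym2.eq_swap⟩⟩
  exact hy ((congrArg (Quot.lift (· ∈ S) hinv) h).mp hx)

theorem IsChain.notMem_of_avoids (hp : G.IsChain x y p) (hx : x ∉ T)
    (havoid : ∀ d ∈ p, ∀ v ∈ G.ends d.2, v ∉ T) : y ∉ T := by
  intro hy
  obtain ⟨e, he, u, hu, w, -, h⟩ := hp.exists_mem_edgeCut (S := T) (by tauto)
  obtain ⟨d, hd, rfl⟩ := List.mem_map.1 he
  exact havoid d hd u (by simp [h]) hu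

theorem Attaches.exists_mem_edgeCut {e : E} {c : V} (he : G.Attaches T e x)
    (hS : Disjoint S T) (hc : c ∈ S) (hp : G.IsChain x c p ∨ G.IsChain c x p) :
    ∃ f ∈ G.edgeCut S, f = e ∨ f ∈ p.map Prod.snd := by
  obtain ⟨-, t, ht, h⟩ := he
  by_cases hx : x ∈ S
  · exact ⟨e, ⟨x, hx, t, Set.disjoint_right.1 hS ht, h.trans Sym2.eq_swap⟩, Or.inl rfl⟩
  · obtain ⟨f, hf, hcut⟩ : ∃ f ∈ p.map Prod.snd, f ∈ G.edgeCut S := by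
      rcases hp with hp | hp <;> exact hp.exists_mem_edgeCut (by tauto)
    exact ⟨f, hcut, Or.inr hf⟩

theorem Attaches.notMem_of_avoids {e : E} (he : G.Attaches T e x)
    (havoid : ∀ d ∈ p, ∀ v ∈ G.ends d.2, v ∉ T) : e ∉ p.map Prod.snd := by
  rintro hmem
  obtain ⟨-, t, ht, h⟩ := he
  obtain ⟨d, hd, rfl⟩ := List.mem_map.1 hmem
  exact havoid d hd t (by simp [h]) ht

theorem three_le_encard {α : Type*} {s : Set α} {a b c : α} (ha : a ∈ s) (hb : b ∈ s) (hc : c ∈ s)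
    (hab : a ≠ b) (hac : a ≠ c) (hbc : b ≠ c) : 3 ≤ s.encard := by
  rw [← Set.encard_eq_three.2 ⟨a, b, c, hab, hac, hbc, rfl⟩]
  exact Set.encard_le_encard (by grind)

-- Two of the attaching edges are joined by a trail off `T`, and a trail from the third meets it at
-- some `c`: the three resulting edge-disjoint routes from `c` to `T` cross every cut around `c`.
theorem Attaches.exists_three_le_encard_edgeCut {e₁ e₂ e₃ : E} {x₁ x₂ x₃ : V}
    (h₁ : G.Attaches T e₁ x₁) (h₂ : G.Attaches T e₂ x₂) (h₃ : G.Attaches T e₃ x₃)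
    (h₁₂ : e₁ ≠ e₂) (h₃₁ : e₃ ≠ e₁) (h₃₂ : e₃ ≠ e₂)
    (hc₁₂ : G.componentOff T x₁ = G.componentOff T x₂)
    (hc₃₁ : G.componentOff T x₃ = G.componentOff T x₁) :
    ∃ c ∉ T, ∀ S, c ∈ S → Disjoint S T → 3 ≤ (G.edgeCut S).encard := by
  obtain ⟨q, ⟨hq, hnd⟩, hqT⟩ := exists_ttrail_of_componentOff_eq hc₁₂
  obtain ⟨p, ⟨hp, -⟩, hpT⟩ := exists_ttrail_of_componentOff_eq hc₃₁
  obtain ⟨c, p', q₁, q₂, hsub, rfl, hdisj, hp', hq₁, hq₂⟩ := hp.exists_edgeDisjoint_truncation hq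
  have hp'T : ∀ d ∈ p', ∀ v ∈ G.ends d.2, v ∉ T := fun d hd => hpT d (hsub hd)
  refine ⟨c, hp'.notMem_of_avoids h₃.1 hp'T, fun S hc hS => ?_⟩
  obtain ⟨f₁, hf₁, hmem₁⟩ := h₁.exists_mem_edgeCut hS hc (Or.inl hq₁)
  obtain ⟨f₂, hf₂, hmem₂⟩ := h₂.exists_mem_edgeCut hS hc (Or.inr hq₂)
  obtain ⟨f₃, hf₃, hmem₃⟩ := h₃.exists_mem_edgeCut hS hc (Or.inl hp')
  have hoff₁ := h₁.notMem_of_avoids hqT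
  have hoff₂ := h₂.notMem_of_avoids hqT
  have hoff₃ := h₃.notMem_of_avoids hqT
  have hoff₁' := h₁.notMem_of_avoids hp'T
  have hoff₂' := h₂.notMem_of_avoids hp'T
  have hdisj₃ := hdisj f₃
  rw [List.map_append] at hnd hoff₁ hoff₂ hoff₃ hdisj₃
  have hq₁₂ : EdgeDisjoint q₁ q₂ := fun _ h h' => List.disjoint_of_nodup_append hnd h h'
  exact three_le_encard hf₁ hf₂ hf₃ (by grind [hq₁₂ f₁]) (by grind) (by grind)

theorem Attaches.eq_or_eq_of_componentOff_eq (hT : G.IsEdgeSeparated 3 T)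
    {e₁ e₂ e₃ : E} {x₁ x₂ x₃ : V}
    (h₁ : G.Attaches T e₁ x₁) (h₂ : G.Attaches T e₂ x₂) (h₃ : G.Attaches T e₃ x₃) (h₁₂ : e₁ ≠ e₂)
    (hc₁₂ : G.componentOff T x₁ = G.componentOff T x₂)
    (hc₃₁ : G.componentOff T x₃ = G.componentOff T x₁) : e₃ = e₁ ∨ e₃ = e₂ := by
  by_contra! hne
  obtain ⟨c, hc, hcut⟩ :=
    h₁.exists_three_le_encard_edgeCut h₂ h₃ h₁₂ hne.1 hne.2 hc₁₂ hc₃₁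
  obtain ⟨S, hcS, hS, hlt⟩ := hT c hc
  exact hlt.not_ge (hcut S hcS hS)

theorem exists_attaching_transversal (hT : G.IsEdgeSeparated 3 T) :
    ∃ R : Set E, (∀ e ∈ R, ∃ x, G.Attaches T e x) ∧
      ∀ e₁ e₂ x₁ x₂, G.Attaches T e₁ x₁ → G.Attaches T e₂ x₂ →
        G.componentOff T x₁ = G.componentOff T x₂ → e₁ ≠ e₂ → (e₁ ∈ R ↔ e₂ ∉ R) := by
  let comps : E → Set (Quot (G.AdjOff T)) :=
    fun e => {K | ∃ x, G.Attaches T e x ∧ G.componentOff T x = K}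
  have hcomps : ∀ e x, G.Attaches T e x → comps e = {G.componentOff T x} := by
    intro e x he
    ext K
    exact ⟨fun ⟨y, hy, hK⟩ => by rw [he.eq hy, hK]; rfl, fun hK => ⟨x, he, hK.symm⟩⟩
  obtain ⟨R, hRsub, hR⟩ := Set.exists_subset_bijOn {e | ∃ x, G.Attaches T e x} comps
  refine ⟨R, hRsub, fun e₁ e₂ x₁ x₂ h₁ h₂ hc hne => ?_⟩
  have hcomps₁₂ : comps e₁ = comps e₂ := by rw [hcomps _ _ h₁, hcomps _ _ h₂, hc]
  obtain ⟨e₃, h₃R, h₃₁⟩ := hR.surjOn ⟨e₁, ⟨x₁, h₁⟩, rfl⟩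
  obtain ⟨x₃, h₃⟩ := hRsub h₃R
  have hc₃₁ : G.componentOff T x₃ = G.componentOff T x₁ := by
    rwa [hcomps _ _ h₃, hcomps _ _ h₁, Set.singleton_eq_singleton_iff] at h₃₁
  have hnot_both : e₁ ∈ R → e₂ ∉ R := fun h₁R h₂R => hne (hR.injOn h₁R h₂R hcomps₁₂)
  rcases h₁.eq_or_eq_of_componentOff_eq hT h₂ h₃ hne hc hc₃₁ with rfl | rfl <;> tauto

variable {A : Type*} [AddCommGroup A] {a : A} {f : E → A}

/-- The edge weights `f` that balance the function equal to `a` on `T` and to `0` elsewhere: each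
excursion of a trail out of `T` uses two distinct edges attaching `T` to the same component, and
their weights together cancel the `a` of the vertex where the excursion starts. -/
structure IsBalancingWeight (G : Multigraph V E) (T : Set V) (a : A) (f : E → A) : Prop where
  inside : ∀ e, ∀ u ∈ T, ∀ w ∈ T, G.ends e = s(u, w) → f e = -a
  outside : ∀ e, ∀ u ∉ T, ∀ w ∉ T, G.ends e = s(u, w) → f e = 0
  attaching : ∀ e₁ e₂ x₁ x₂, G.Attaches T e₁ x₁ → G.Attaches T e₂ x₂ →
    G.componentOff T x₁ = G.componentOff T x₂ → e₁ ≠ e₂ → f e₁ + f e₂ = -a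

theorem exists_isBalancingWeight (hT : G.IsEdgeSeparated 3 T) (a : A) :
    ∃ f, G.IsBalancingWeight T a f := by
  classical
  obtain ⟨R, hRsub, hR⟩ := exists_attaching_transversal hT
  let f : E → A := fun e => if (∀ v ∈ G.ends e, v ∈ T) ∨ e ∈ R then -a else 0
  have hf : ∀ e x, G.Attaches T e x → f e = if e ∈ R then -a else 0 := by
    rintro e x ⟨hx, t, -, h⟩
    have : ¬ ∀ v ∈ G.ends e, v ∈ T := fun hall => hx (hall x (by simp [h]))
    simp only [f, this, false_or]
  refine ⟨f, fun e u hu w hw h => if_pos (Or.inl (by simp [h, hu, hw])), ?_, ?_⟩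
  · intro e u hu w hw h
    refine if_neg (not_or_intro (fun hall => hu (hall u (by simp [h]))) fun he => ?_)
    obtain ⟨x, -, t, ht, h'⟩ := hRsub e he
    grind [Sym2.eq_iff]
  · intro e₁ e₂ x₁ x₂ h₁ h₂ hc hne
    have hiff := hR e₁ e₂ x₁ x₂ h₁ h₂ hc hne
    rw [hf e₁ x₁ h₁, hf e₂ x₂ h₂]
    by_cases h₂R : e₂ ∈ R <;> simp [hiff, h₂R]

-- The second conjunct is the first one for a trail resumed in the middle of an excursion that left
-- `T` through `e₀`.
theorem IsBalancingWeight.pathSum_of_end_mem (hf : G.IsBalancingWeight T a f)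
    (hp : G.IsTtrail x y p) (hy : y ∈ T) :
    (x ∈ T → pathSum (T.indicator fun _ => a) f p = 0) ∧
      ∀ e₀ x₀, G.Attaches T e₀ x₀ → x ∉ T → G.componentOff T x₀ = G.componentOff T x →
        e₀ ∉ p.map Prod.snd → f e₀ + a + pathSum (T.indicator fun _ => a) f p = 0 := by
  induction p generalizing x with
  | nil =>
    cases (hp.1 : x = y)
    exact ⟨fun _ => by simp [pathSum], fun _ _ _ hx => absurd hy hx⟩
  | cons d p ih =>
    obtain ⟨v, e⟩ := d
    obtain ⟨⟨rfl, w, hw, hp⟩, hnd⟩ := hp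
    rw [List.map_cons, List.nodup_cons] at hnd
    obtain ⟨ih_mem, ih_notMem⟩ := ih ⟨hp, hnd.2⟩
    rw [pathSum_cons]
    constructor
    · intro hv
      rw [Set.indicator_of_mem hv]
      by_cases hwT : w ∈ T
      · rw [ih_mem hwT, hf.inside e v hv w hwT hw, add_neg_cancel, add_zero]
      · rw [add_comm a]
        exact ih_notMem e w ⟨hwT, v, hv, hw⟩ hwT rfl hnd.1
    · intro e₀ x₀ h₀ hv hc he₀
      rw [List.map_cons, List.mem_cons, not_or] at he₀
      rw [Set.indicator_of_notMem hv, zero_add]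
      by_cases hwT : w ∈ T
      · have h₁ : G.Attaches T e v := ⟨hv, w, hwT, hw.trans Sym2.eq_swap⟩
        rw [ih_mem hwT, add_zero, add_right_comm, hf.attaching e₀ e x₀ v h₀ h₁ hc he₀.1,
          neg_add_cancel]
      · rw [hf.outside e v hv w hwT hw, zero_add]
        have hvw : G.componentOff T v = G.componentOff T w := Quot.sound ⟨hv, hwT, e, hw⟩
        exact ih_notMem e₀ x₀ h₀ hwT (hc.trans hvw) he₀.2

theorem IsBalancingWeight.pathSum_eq_zero_of_forall_notMem (hf : G.IsBalancingWeight T a f)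
    (hp : G.IsChain x y p) (hy : y ∉ T) (hpT : ∀ v ∈ p.map Prod.fst, v ∉ T) :
    x ∉ T ∧ pathSum (T.indicator fun _ => a) f p = 0 := by
  induction p generalizing x with
  | nil =>
    cases (hp : x = y)
    exact ⟨hy, rfl⟩
  | cons d p ih =>
    obtain ⟨v, e⟩ := d
    obtain ⟨rfl, w, hw, hp⟩ := hp
    obtain ⟨hv, hpT⟩ := List.forall_mem_cons.1 hpT
    obtain ⟨hwT, hsum⟩ := ih hp hpT
    refine ⟨hv, ?_⟩
    rw [pathSum_cons, hsum, Set.indicator_of_notMem hv, hf.outside e v hv w hwT hw, add_zero,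
      add_zero]

theorem IsBalancingWeight.pathSum_eq_zero (hf : G.IsBalancingWeight T a f)
    (hp : G.IsTtrail x x p) : pathSum (T.indicator fun _ => a) f p = 0 := by
  by_cases hpT : ∃ v ∈ p.map Prod.fst, v ∈ T
  · obtain ⟨v, hv, hvT⟩ := hpT
    obtain ⟨q, hperm, hq⟩ := hp.exists_rotation hv
    rw [← (hf.pathSum_of_end_mem hq hvT).1 hvT]
    exact ((hperm.map _).sum_eq).symm
  · push Not at hpT
    cases p with
    | nil => rfl
    | cons d p =>
      have hx : x ∉ T := hp.1.1 ▸ hpT d.1 (by simp)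
      exact (hf.pathSum_eq_zero_of_forall_notMem hp.1 hx hpT).2

theorem IsEdgeSeparated.balanceable_indicator (hT : G.IsEdgeSeparated 3 T) (a : A) :
    G.Balanceable (T.indicator fun _ => a) := by
  obtain ⟨f, hf⟩ := exists_isBalancingWeight hT a
  exact ⟨f, fun _ _ hp => hf.pathSum_eq_zero hp⟩

open Classical in
theorem stmt14_general (G : Multigraph V E) (v₀ : V) (a : A) :
    G.Balanceable (fun w => if G.KConn 3 w v₀ then a else 0) := by
  convert (G.isEdgeSeparated_setOf_kConn (k := 3) (t := v₀)).balanceable_indicator a using 1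
  ext w
  simp [Set.indicator_apply]

end

open Classical in
theorem stmt14 (G : Multigraph V E) {A : Type*} [AddCommGroup A] (v₀ : V) (a : A) :
    G.Balanceable (fun w => if G.KConn 3 w v₀ then a else 0) :=
  G.stmt14_general v₀ a

end Multigraph
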